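/- There exists a universal constant c > 0 (independent of φ and n) such that: for every increasing concave function φ : [0,1] → [0,∞) with φ(0) = 0, every n ∈ ℕ, and every finite family f_1, …, f_n in the Marcinkiewicz space M_φ on [0,1], one has ‖Σ_{k=1}^n ‖f_k‖_{L^1} r_k‖_{M_φ} ≤ c · max_{ε ∈ {-1,1}^n} ‖Σ_{k=1}^n ε_k f_k‖_{M_φ}, where r_k are the Rademacher functions. -/

import Mathlib

/-!
The inequality holds with `c = 2`, and for each argument `t` of the `K`-functional separately;
`φ` enters only as a nonnegative weight. Let `V` bound `K(t, F_θ)` for every sign vector `θ`, where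
`F_θ = ∑ θ_k f_k`. At the level `M = V / t` every `F_θ` satisfies `∫ (|F_θ| - M)⁺ ≤ V`
(`lintegral_excess_le_of_Kfun_lt`), up to an arbitrarily small loss in `V`.

For a sign vector `η` put `S(η) = ∑ η_k ‖f_k‖₁ = ∫ ∑ η_k |f_k(x)| dx`. Jensen's inequality gives
`(|S(η)| - M)⁺ ≤ ∫ (|∑ η_k |f_k(x)|| - M)⁺ dx`. Averaging over `η` and exchanging with the
integral, the absolute values can be dropped, because for fixed `x` multiplication by the signs of
`f_k(x)` permutes the sign vectors (`sum_sign_abs`). Hence the average of `(|S| - M)⁺` is at most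
`V`. The Rademacher functions are independent symmetric signs (`lintegral_rademacher`), so this
average equals `∫ (|∑ ‖f_k‖₁ r_k| - M)⁺`, and truncation at `M` (`Kfun_le_excess`) bounds
`K(t, ∑ ‖f_k‖₁ r_k)` by `V + t M = 2 V`.
-/

open MeasureTheory
open scoped ENNReal

/-- Lebesgue measure restricted to `[0,1]`. -/
noncomputable def mu01 : Measure ℝ := volume.restrict (Set.Icc 0 1)

/-- The weight `W_p(t) = (log(e/t))^{1-p}` for `t ∈ (0,1]`, `W_p(0)=0`. -/
noncomputable def Wp (p t : ℝ) : ℝ :=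
  if t = 0 then 0 else Real.log (Real.exp 1 / t) ^ (1 - p)

/-- The norm of the Lorentz space `X_p` on `[0,1]`:
`‖f‖_{X_p} = (∫_0^∞ W_p(μ{s ∈ [0,1] : |f s|^p > λ}) dλ)^{1/p}`. -/
noncomputable def XpNorm (p : ℝ) (f : ℝ → ℝ) : ℝ≥0∞ :=
  (∫⁻ lam in Set.Ioi (0 : ℝ),
      ENNReal.ofReal
        (Wp p (volume {s : ℝ | s ∈ Set.Icc (0 : ℝ) 1 ∧ lam < |f s| ^ p}).toReal)) ^ (1 / p)

/-- Luxemburg norm of the exponential Orlicz space `Exp L^α` on `[0,1]`. -/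
noncomputable def expLNorm (α : ℝ) (f : ℝ → ℝ) : ℝ≥0∞ :=
  ⨅ (lam : ℝ) (_ : 0 < lam ∧
      ∫⁻ t, ENNReal.ofReal (Real.exp ((|f t| / lam) ^ α) - 1) ∂mu01 ≤ 1),
    ENNReal.ofReal lam

/-- Weak `ℓ^q` quasinorm of a finite family of reals. -/
noncomputable def weakLq (q : ℝ) {n : ℕ} (a : Fin n → ℝ) : ℝ :=
  ⨆ t : Set.Ioi (0 : ℝ), t.1 * (Nat.card {k : Fin n // t.1 < |a k|} : ℝ) ^ (1 / q)

/-- Weak `ℓ^q` quasinorm of a sequence with values in `[0,∞]`, cardinalities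
taken via the counting measure on `ℕ`. -/
noncomputable def weakLqSeq (q : ℝ) (a : ℕ → ℝ≥0∞) : ℝ≥0∞ :=
  ⨆ t : Set.Ioi (0 : ℝ),
    ENNReal.ofReal t.1 * Measure.count {k : ℕ | ENNReal.ofReal t.1 < a k} ^ (1 / q)

/-- Peetre `K`-functional for the couple `(L^1[0,1], L^∞[0,1])`. -/
noncomputable def Kfun (τ : ℝ) (f : ℝ → ℝ) : ℝ≥0∞ :=
  ⨅ (g : ℝ → ℝ) (h : ℝ → ℝ) (_ : f = g + h),
    eLpNorm g 1 mu01 + ENNReal.ofReal τ * eLpNorm h ⊤ mu01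

/-- The Rademacher functions `r_k(t) = sgn(sin(2^k π t))`. -/
noncomputable def rademacher (k : ℕ) (t : ℝ) : ℝ :=
  Real.sign (Real.sin (2 ^ k * Real.pi * t))

/-- Marcinkiewicz space norm `‖f‖_{M_φ} = sup_{0<t≤1} (φ(t)/t) K(t,f;L^1,L^∞)`. -/
noncomputable def MNorm (φ : ℝ → ℝ) (f : ℝ → ℝ) : ℝ≥0∞ :=
  ⨆ t : {t : ℝ // 0 < t ∧ t ≤ 1}, ENNReal.ofReal (φ t.1 / t.1) * Kfun t.1 f
/-- The real number `±1` attached to a sign. -/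
def signVal (s : ℤˣ) : ℝ := ((s : ℤ) : ℝ)

lemma signVal_eq (s : ℤˣ) : signVal s = 1 ∨ signVal s = -1 := by
  rcases Int.units_eq_one_or s with rfl | rfl <;> simp [signVal]

/-- The excess `(|y| - M)⁺` of `y` over the level `M`. -/
noncomputable def excess (M y : ℝ) : ℝ≥0∞ := ENNReal.ofReal (|y| - M)

lemma measurable_excess (M : ℝ) : Measurable (excess M) := by
  unfold excess; fun_prop

instance : IsProbabilityMeasure mu01 := ⟨by simp [mu01]⟩

lemma measurable_rademacher (k : ℕ) : Measurable (rademacher k) := by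
  have h : rademacher k = Real.sign ∘ fun t => Real.sin (2 ^ k * Real.pi * t) := rfl
  rw [h]
  refine Measurable.comp ?_ (by fun_prop)
  unfold Real.sign
  exact Measurable.ite measurableSet_Iio measurable_const
    (Measurable.ite measurableSet_Ioi measurable_const measurable_const)

lemma rademacher_succ_half (k : ℕ) (t : ℝ) :
    rademacher (k + 1) (2⁻¹ * t) = rademacher k t := by
  unfold rademacher
  congr 2; ring

lemma rademacher_succ_half_add (k : ℕ) (t : ℝ) :
    rademacher (k + 2) (2⁻¹ * t + 2⁻¹) = rademacher (k + 1) t := by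
  unfold rademacher
  have : (2 : ℝ) ^ (k + 2) * Real.pi * (2⁻¹ * t + 2⁻¹) =
      2 ^ (k + 1) * Real.pi * t + (2 ^ k : ℕ) * (2 * Real.pi) := by
    push_cast; ring
  rw [this, Real.sin_add_nat_mul_two_pi]

lemma rademacher_one_left {t : ℝ} (h0 : 0 < t) (h1 : t < 1) :
    rademacher 1 (2⁻¹ * t) = 1 := by
  unfold rademacher
  apply Real.sign_of_pos
  have := Real.pi_pos
  apply Real.sin_pos_of_pos_of_lt_pi <;> nlinarith

lemma rademacher_one_right {t : ℝ} (h0 : 0 < t) (h1 : t < 1) :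
    rademacher 1 (2⁻¹ * t + 2⁻¹) = -1 := by
  unfold rademacher
  apply Real.sign_of_neg
  have := Real.pi_pos
  have e : (2 : ℝ) ^ 1 * Real.pi * (2⁻¹ * t + 2⁻¹) = Real.pi * t + Real.pi := by ring
  rw [e, Real.sin_add_pi, neg_lt_zero]
  apply Real.sin_pos_of_pos_of_lt_pi <;> nlinarith

lemma lintegral_mu01_affine (b : ℝ) (F : ℝ → ℝ≥0∞) :
    ∫⁻ t in Set.Ioo b (b + 2⁻¹), F t = 2⁻¹ * ∫⁻ t in Set.Ioo 0 1, F (2⁻¹ * t + b) := by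
  have h := lintegral_image_eq_lintegral_abs_deriv_mul (s := Set.Ioo (0 : ℝ) 1)
    (f := fun t => 2⁻¹ * t + b) (f' := fun _ => 2⁻¹) measurableSet_Ioo
    (fun x _ => by
      simpa using (((hasDerivAt_id x).const_mul (2⁻¹ : ℝ)).add_const b).hasDerivWithinAt)
    (fun x _ y _ hxy => by simpa using hxy) F
  have him : (fun t : ℝ => 2⁻¹ * t + b) '' Set.Ioo 0 1 = Set.Ioo b (b + 2⁻¹) := by
    rw [Set.image_affine_Ioo (by norm_num)]
    congr 1 <;> ring
  rw [him, lintegral_const_mul' _ _ (by simp)] at h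
  rw [h, abs_of_pos (by norm_num), ENNReal.ofReal_inv_of_pos (by norm_num)]
  simp

lemma lintegral_mu01_split (F : ℝ → ℝ≥0∞) :
    ∫⁻ t, F t ∂mu01 = 2⁻¹ * (∫⁻ t in Set.Ioo 0 1, F (2⁻¹ * t)) +
      2⁻¹ * ∫⁻ t in Set.Ioo 0 1, F (2⁻¹ * t + 2⁻¹) := by
  have h1 := lintegral_mu01_affine 0 F
  have h2 := lintegral_mu01_affine 2⁻¹ F
  norm_num at h1 h2
  norm_num
  rw [← h1, ← h2, mu01, ← setLIntegral_congr Ico_ae_eq_Icc,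
    ← Set.Ico_union_Ico_eq_Ico (b := (1 / 2 : ℝ)) (by norm_num) (by norm_num),
    lintegral_union measurableSet_Ico
      (Set.disjoint_left.2 fun x hx hy => absurd hx.2 (not_lt.2 hy.1)),
    setLIntegral_congr Ioo_ae_eq_Ico, setLIntegral_congr Ioo_ae_eq_Ico]

/-- The Rademacher functions `r_1, …, r_n` are independent symmetric signs. The induction
splits `[0,1]` at `1/2`: on each half `r_1` is constant and the other functions are a rescaled
copy of `r_1, …, r_{n-1}`. -/
lemma lintegral_rademacher (n : ℕ) (Φ : (Fin n → ℝ) → ℝ≥0∞) :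
    ∫⁻ t, Φ (fun k => rademacher (k.1 + 1) t) ∂mu01 =
      (2 ^ n)⁻¹ * ∑ η : Fin n → ℤˣ, Φ (fun k => signVal (η k)) := by
  induction n with
  | zero =>
    have : ∀ t : ℝ, (fun k : Fin 0 => rademacher (k.1 + 1) t) = fun k => k.elim0 :=
      fun t => funext fun k => k.elim0
    have h2 : ∀ η : Fin 0 → ℤˣ, (fun k : Fin 0 => signVal (η k)) = fun k => k.elim0 :=
      fun t => funext fun k => k.elim0
    simp [this, h2]
  | succ n ih =>
    have key : ∀ (b : ℝ) (s : ℤˣ),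
        (∀ t ∈ Set.Ioo (0 : ℝ) 1, rademacher 1 (2⁻¹ * t + b) = signVal s) →
        (∀ (k : ℕ) (t : ℝ), rademacher (k + 2) (2⁻¹ * t + b) = rademacher (k + 1) t) →
        ∫⁻ t in Set.Ioo 0 1, Φ (fun k => rademacher (k.1 + 1) (2⁻¹ * t + b)) =
          (2 ^ n)⁻¹ * ∑ η : Fin n → ℤˣ, Φ (Fin.cons (signVal s) fun k => signVal (η k)) := by
      intro b s h1 h2
      rw [← ih (fun y => Φ (Fin.cons (signVal s) y)), mu01, ← setLIntegral_congr Ioo_ae_eq_Icc]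
      refine setLIntegral_congr_fun measurableSet_Ioo fun t ht => ?_
      congr 1
      funext k
      refine Fin.cases ?_ (fun j => ?_) k
      · simpa using h1 t ht
      · simpa using h2 j t
    rw [lintegral_mu01_split]
    have k1 := key 0 1 (fun t ht => by
      simpa [signVal] using rademacher_one_left ht.1 ht.2)
      (fun k t => by simpa using rademacher_succ_half (k + 1) t)
    have k2 := key 2⁻¹ (-1) (fun t ht => by
      simpa [signVal] using rademacher_one_right ht.1 ht.2)
      (fun k t => rademacher_succ_half_add k t)
    simp only [add_zero] at k1
    rw [k1, k2, ← (Fin.consEquiv fun _ : Fin (n + 1) => ℤˣ).sum_comp, Fintype.sum_prod_type]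
    have hu : (Finset.univ : Finset ℤˣ) = {1, -1} := by decide
    have hc : ∀ (s : ℤˣ) (η : Fin n → ℤˣ),
        (fun k => signVal ((Fin.consEquiv fun _ : Fin (n + 1) => ℤˣ) (s, η) k)) =
          (Fin.cons (signVal s) fun k => signVal (η k) : Fin (n + 1) → ℝ) := by
      intro s η
      funext k
      refine Fin.cases ?_ (fun j => ?_) k <;> simp [Fin.consEquiv]
    simp only [hc]
    rw [hu, Finset.sum_pair (by decide), pow_succ,
      ENNReal.mul_inv (by simp) (by simp)]
    ring

/-- A decomposition witnessing `K(t, F) < B` leaves mass less than `B` above the level `B / t`.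
The summands of the decomposition need not be measurable. -/
lemma lintegral_excess_le_of_Kfun_lt {t B : ℝ} (ht : 0 < t) {F : ℝ → ℝ}
    (h : Kfun t F < ENNReal.ofReal B) :
    ∫⁻ x, excess (B / t) (F x) ∂mu01 ≤ ENNReal.ofReal B := by
  simp only [Kfun, iInf_lt_iff] at h
  obtain ⟨g, h, hF, hlt⟩ := h
  have hB : 0 < B := by
    by_contra hB
    rw [ENNReal.ofReal_of_nonpos (not_lt.1 hB)] at hlt
    exact not_lt_zero hlt
  have hh : eLpNorm h ⊤ mu01 ≤ ENNReal.ofReal (B / t) := by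
    rw [ENNReal.ofReal_div_of_pos ht, ENNReal.le_div_iff_mul_le (by simp [ht]) (by simp), mul_comm]
    exact le_add_self.trans hlt.le
  have hg : eLpNorm g 1 mu01 ≤ ENNReal.ofReal B := le_self_add.trans hlt.le
  refine le_trans ?_ hg
  rw [eLpNorm_one_eq_lintegral_enorm]
  apply lintegral_mono_ae
  rw [eLpNorm_exponent_top] at hh
  filter_upwards [ae_le_eLpNormEssSup (f := h) (μ := mu01)] with x hx
  have hx' : |h x| ≤ B / t := by
    have := hx.trans hh
    rwa [Real.enorm_eq_ofReal_abs, ENNReal.ofReal_le_ofReal_iff (by positivity)] at this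
  rw [excess, Real.enorm_eq_ofReal_abs]
  apply ENNReal.ofReal_le_ofReal
  rw [hF]
  have := abs_add_le (g x) (h x)
  simp only [Pi.add_apply]
  linarith

/-- Truncation at the level `M` bounds the `K`-functional. -/
lemma Kfun_le_excess (t : ℝ) {M : ℝ} (hM : 0 ≤ M) (F : ℝ → ℝ) :
    Kfun t F ≤ ∫⁻ x, excess M (F x) ∂mu01 + ENNReal.ofReal t * ENNReal.ofReal M := by
  unfold Kfun
  refine (iInf_le _ (fun x => F x - max (-M) (min M (F x)))).trans
    ((iInf_le _ (fun x => max (-M) (min M (F x)))).trans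
    ((iInf_le _ (by funext x; simp)).trans ?_))
  gcongr
  · rw [eLpNorm_one_eq_lintegral_enorm]
    apply lintegral_mono
    intro x
    dsimp only
    rw [excess, Real.enorm_eq_ofReal_abs, ENNReal.ofReal_le_ofReal_iff']
    rcases abs_cases (F x) with h | h <;> rcases le_total M (F x) with h1 | h1 <;>
      rcases le_total (F x) (-M) with h2 | h2 <;>
      simp only [h1, h, min_eq_left, min_eq_right] <;>
      first
        | (rw [max_eq_right (by linarith)]; simp; try grind)
        | (rw [max_eq_left (by linarith)]; simp; try grind)
  · rw [eLpNorm_exponent_top]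
    apply eLpNormEssSup_le_of_ae_enorm_bound
    refine Filter.Eventually.of_forall fun x => ?_
    rw [Real.enorm_eq_ofReal_abs]
    apply ENNReal.ofReal_le_ofReal
    rw [abs_le]
    exact ⟨le_max_left _ _, max_le (by linarith) (min_le_left _ _)⟩

lemma integrable_of_Kfun_lt_top {t : ℝ} (ht : 0 < t) {F : ℝ → ℝ} (hF : Measurable F)
    (h : Kfun t F < ⊤) : Integrable F mu01 := by
  refine ⟨hF.aestronglyMeasurable, ?_⟩
  obtain ⟨B, hB⟩ := ENNReal.lt_iff_exists_nnreal_btwn.1 h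
  rw [← ENNReal.ofReal_coe_nnreal] at hB
  have hex := lintegral_excess_le_of_Kfun_lt ht hB.1
  have : ∫⁻ x, ‖F x‖ₑ ∂mu01 ≤
      ∫⁻ x, (excess (B / t) (F x) + ENNReal.ofReal (B / t)) ∂mu01 := by
    apply lintegral_mono
    intro x
    dsimp only
    rw [excess, Real.enorm_eq_ofReal_abs]
    refine le_trans (le_of_eq ?_) ENNReal.ofReal_add_le
    congr 1; ring
  refine this.trans_lt ?_
  rw [lintegral_add_right _ measurable_const]
  simp only [lintegral_const, measure_univ, mul_one]
  exact ENNReal.add_lt_top.2 ⟨hex.trans_lt ENNReal.ofReal_lt_top, ENNReal.ofReal_lt_top⟩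

/-- Jensen's inequality for the convex function `y ↦ (|y| - M)⁺`. -/
lemma excess_integral_le {M : ℝ} (hM : 0 ≤ M) (G : ℝ → ℝ) :
    excess M (∫ x, G x ∂mu01) ≤ ∫⁻ x, excess M (G x) ∂mu01 := by
  rw [excess, ENNReal.ofReal_sub _ hM, tsub_le_iff_right, ← Real.enorm_eq_ofReal_abs]
  refine (enorm_integral_le_lintegral_enorm G).trans ?_
  have : ∫⁻ x, excess M (G x) ∂mu01 + ENNReal.ofReal M =
      ∫⁻ x, (excess M (G x) + ENNReal.ofReal M) ∂mu01 := by
    rw [lintegral_add_right _ measurable_const]; simp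
  rw [this]
  apply lintegral_mono
  intro x
  dsimp only
  rw [excess, Real.enorm_eq_ofReal_abs]
  refine le_trans (le_of_eq ?_) ENNReal.ofReal_add_le
  congr 1; ring

/-- The full sign orbit of `(y_k)` is that of `(|y_k|)`. -/
lemma sum_sign_abs {n : ℕ} (ψ : ℝ → ℝ≥0∞) (y : Fin n → ℝ) :
    ∑ η : Fin n → ℤˣ, ψ (∑ k, signVal (η k) * |y k|) =
      ∑ η : Fin n → ℤˣ, ψ (∑ k, signVal (η k) * y k) := by
  let σ : Fin n → ℤˣ := fun k => if 0 ≤ y k then 1 else -1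
  refine Eq.trans ?_ (Equiv.sum_comp (Equiv.mulRight σ) fun η => ψ (∑ k, signVal (η k) * y k))
  refine Finset.sum_congr rfl fun η _ => ?_
  congr 1
  refine Finset.sum_congr rfl fun k _ => ?_
  simp only [Equiv.coe_mulRight, Pi.mul_apply, σ, signVal]
  split_ifs with h
  · simp [abs_of_nonneg h]
  · simp [abs_of_neg (not_le.1 h)]

/-- The theorem at a single argument `t` of the `K`-functional. Writing `σ_k = sgn f_k`, the value
of `∑ ‖f_k‖₁ r_k` at signs `η` is the `x`-average of `∑ η_k σ_k(x) f_k(x)`, and for each fixed `x`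
the signs `η σ(x)` are again uniformly distributed. -/
lemma Kfun_rademacher_le {t B : ℝ} (ht : 0 < t) (hB : 0 ≤ B) {n : ℕ} {f : Fin n → ℝ → ℝ}
    (hf : ∀ k, Measurable (f k)) (hi : ∀ k, Integrable (f k) mu01)
    (hK : ∀ η : Fin n → ℤˣ, Kfun t (fun x => ∑ k, signVal (η k) * f k x) < ENNReal.ofReal B) :
    Kfun t (fun u => ∑ k, (eLpNorm (f k) 1 mu01).toReal * rademacher (k.1 + 1) u) ≤
      2 * ENNReal.ofReal B := by
  have hM : 0 ≤ B / t := by positivity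
  refine (Kfun_le_excess t hM _).trans ?_
  rw [← ENNReal.ofReal_mul ht.le, mul_div_cancel₀ _ ht.ne', two_mul]
  gcongr
  rw [lintegral_rademacher n fun y =>
    excess (B / t) (∑ k, (eLpNorm (f k) 1 mu01).toReal * y k)]
  have hS : ∀ η : Fin n → ℤˣ,
      ∑ k, (eLpNorm (f k) 1 mu01).toReal * signVal (η k) =
        ∫ x, ∑ k, signVal (η k) * |f k x| ∂mu01 := by
    intro η
    rw [integral_finsetSum _ fun k _ => (hi k).abs.const_mul _]
    refine Finset.sum_congr rfl fun k _ => ?_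
    rw [integral_const_mul, mul_comm]
    congr 1
    rw [eLpNorm_one_eq_lintegral_enorm, ← integral_norm_eq_lintegral_enorm (hi k).1]
    rfl
  have hmeas : ∀ η : Fin n → ℤˣ,
      Measurable fun x => excess (B / t) (∑ k, signVal (η k) * f k x) := fun η =>
    (measurable_excess _).comp (by fun_prop)
  have hmeas' : ∀ η : Fin n → ℤˣ,
      Measurable fun x => excess (B / t) (∑ k, signVal (η k) * |f k x|) := fun η =>
    (measurable_excess _).comp
      (Finset.measurable_fun_sum _ fun k _ => (hf k).abs.const_mul _)
  calc (2 ^ n)⁻¹ * ∑ η : Fin n → ℤˣ,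
        excess (B / t) (∑ k, (eLpNorm (f k) 1 mu01).toReal * signVal (η k))
      ≤ (2 ^ n)⁻¹ * ∑ η : Fin n → ℤˣ,
          ∫⁻ x, excess (B / t) (∑ k, signVal (η k) * |f k x|) ∂mu01 := by
        gcongr with η
        rw [hS]
        exact excess_integral_le hM _
    _ = (2 ^ n)⁻¹ * ∑ η : Fin n → ℤˣ,
          ∫⁻ x, excess (B / t) (∑ k, signVal (η k) * f k x) ∂mu01 := by
        rw [← lintegral_finsetSum _ fun η _ => hmeas' η,
          ← lintegral_finsetSum _ fun η _ => hmeas η]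
        simp only [fun x => sum_sign_abs (excess (B / t)) fun k => f k x]
    _ ≤ (2 ^ n)⁻¹ * ∑ η : Fin n → ℤˣ, ENNReal.ofReal B := by
        gcongr with η
        exact lintegral_excess_le_of_Kfun_lt ht (hK η)
    _ = ENNReal.ofReal B := by
        rw [Finset.sum_const, Finset.card_univ, Fintype.card_fun, Fintype.card_fin,
          nsmul_eq_mul, ← mul_assoc]
        have : Fintype.card ℤˣ = 2 := by decide
        rw [this]
        push_cast
        rw [ENNReal.inv_mul_cancel (by simp) (by simp), one_mul]

/-- Theorem: there is a universal constant `c > 0` such that for every increasing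
concave `φ : [0,1] → [0,∞)` with `φ(0) = 0` and every finite family in `M_φ`,
`‖∑ ‖f_k‖_1 r_k‖_{M_φ} ≤ c max_{ε=±1} ‖∑ ε_k f_k‖_{M_φ}`. -/
theorem marcinkiewicz_rademacher_bound :
    ∃ c : ℝ, 0 < c ∧ ∀ φ : ℝ → ℝ, MonotoneOn φ (Set.Icc 0 1) →
      ConcaveOn ℝ (Set.Icc 0 1) φ → φ 0 = 0 → (∀ t ∈ Set.Icc (0:ℝ) 1, 0 ≤ φ t) →
      ∀ (n : ℕ) (f : Fin n → ℝ → ℝ), (∀ k, Measurable (f k)) →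
        (∀ k, MNorm φ (f k) ≠ ⊤) →
        MNorm φ (fun t => ∑ k, (eLpNorm (f k) 1 mu01).toReal * rademacher (k.1 + 1) t) ≤
          ENNReal.ofReal c *
            ⨆ ε : Fin n → ({-1, 1} : Set ℝ),
              MNorm φ (fun t => ∑ k, (ε k : ℝ) * f k t) := by
  refine ⟨2, by norm_num, ?_⟩
  intro φ _ _ _ _ n f hf hfin
  refine iSup_le ?_
  rintro ⟨t, ht0, ht1⟩
  dsimp only
  -- Where the weight vanishes there is nothing to prove; elsewhere `K(t, f_k)` is finite, which
  -- makes every `f_k` integrable.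
  rcases eq_or_ne (ENNReal.ofReal (φ t / t)) 0 with hw | hw
  · simp [hw]
  have hMN : ∀ F : ℝ → ℝ, ENNReal.ofReal (φ t / t) * Kfun t F ≤ MNorm φ F := fun F =>
    le_iSup (fun s : {t : ℝ // 0 < t ∧ t ≤ 1} => ENNReal.ofReal (φ s.1 / s.1) * Kfun s.1 F)
      ⟨t, ht0, ht1⟩
  have hi : ∀ k, Integrable (f k) mu01 := by
    intro k
    refine integrable_of_Kfun_lt_top ht0 (hf k) ?_
    refine ENNReal.lt_top_of_mul_ne_top_right (ne_top_of_le_ne_top (hfin k) (hMN _)) hw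
  set R := ⨆ ε : Fin n → ({-1, 1} : Set ℝ), MNorm φ (fun t => ∑ k, (ε k : ℝ) * f k t) with hR
  have hη : ∀ η : Fin n → ℤˣ,
      Kfun t (fun x => ∑ k, signVal (η k) * f k x) ≤ R / ENNReal.ofReal (φ t / t) := by
    intro η
    rw [ENNReal.le_div_iff_mul_le (Or.inl hw) (by simp), mul_comm]
    refine (hMN _).trans ?_
    exact le_iSup (fun ε : Fin n → ({-1, 1} : Set ℝ) =>
      MNorm φ (fun t => ∑ k, (ε k : ℝ) * f k t))
      (fun k => ⟨signVal (η k), by rcases signVal_eq (η k) with h | h <;> simp [h]⟩)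
  have hmain : Kfun t (fun u => ∑ k, (eLpNorm (f k) 1 mu01).toReal * rademacher (k.1 + 1) u) / 2 ≤
      R / ENNReal.ofReal (φ t / t) := by
    refine le_of_forall_gt_imp_ge_of_dense fun b hb => ?_
    rcases eq_or_ne b ⊤ with rfl | hbt
    · exact le_top
    rw [ENNReal.div_le_iff' (by simp) (by simp), ← ENNReal.ofReal_toReal hbt]
    refine Kfun_rademacher_le ht0 ENNReal.toReal_nonneg hf hi fun η => ?_
    rw [ENNReal.ofReal_toReal hbt]
    exact (hη η).trans_lt hb
  rw [ENNReal.div_le_iff' (by simp) (by simp), ← mul_div_assoc,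
    ENNReal.le_div_iff_mul_le (Or.inl hw) (by simp), mul_comm] at hmain
  simpa using hmain
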